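/- Let A and B be C*-algebras with A separable, and let φ, ψ: A → B be *-homomorphisms which are approximately Murray–von Neumann equivalent. If either (a) A and B are unital and φ and ψ are unital, or (c) B has stable rank one, then φ and ψ are approximately unitarily equivalent: in case (a) with unitaries in B, and in case (c) with unitaries in the minimal unitisation of B. -/

import Mathlib

open Filter Topology Set

universe u v


section MvN

variable {A : Type u} {B : Type v} [NonUnitalCStarAlgebra A] [NonUnitalCStarAlgebra B]

/-- Two *-homomorphisms `φ, ψ : A → B` are approximately Murray–von Neumann equivalent if
for every finite `F ⊆ A` and `ε > 0` there is `u ∈ B` with `‖u* φ(a) u - ψ(a)‖ < ε` and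
`‖u ψ(a) u* - φ(a)‖ < ε` for all `a ∈ F`. -/
def ApproxMvNEquiv (φ ψ : A →⋆ₙₐ[ℂ] B) : Prop :=
  ∀ (F : Finset A) (ε : ℝ), 0 < ε → ∃ u : B,
    ∀ a ∈ F, ‖star u * φ a * u - ψ a‖ < ε ∧ ‖u * ψ a * star u - φ a‖ < ε

end MvN

/-!
Take a positive element `e` of `A` and let `u` implement the Murray–von Neumann equivalence on a
large finite set. Then `x = φ e * u` satisfies `star x * x = star u * φ (e * e) * u ≈ ψ e * ψ e`, so
`|x| ≈ ψ e`. If `x` is a limit of invertible elements, the polar decomposition of nearby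
invertibles yields a unitary `w` with `x ≈ w * ψ e`, whence
`φ (e * a * e) ≈ φ e * (u * ψ a * star u) * φ e = x * ψ a * star x ≈ w * ψ (e * a * e) * star w`.
In the unital case `e = 1` and `x = u` is itself invertible; under stable rank one every `x` is
such a limit, and `e` runs through an approximate unit.
-/

theorem isUnit_of_isUnit_mul_of_isUnit_mul {M : Type*} [Monoid M] {a b : M}
    (hab : IsUnit (a * b)) (hba : IsUnit (b * a)) : IsUnit b := by
  obtain ⟨c, hc⟩ := hba.exists_right_inv
  obtain ⟨d, hd⟩ := hab.exists_left_inv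
  exact isUnit_iff_exists_and_exists.2
    ⟨⟨a * c, by rw [← mul_assoc, hc]⟩, ⟨d * a, by rw [mul_assoc, hd]⟩⟩

theorem isUnit_of_norm_sub_one_lt_one {R : Type*} [NormedRing R] [HasSummableGeomSeries R] {x : R}
    (hx : ‖x - 1‖ < 1) : IsUnit x := by
  simpa using isUnit_one_sub_of_norm_lt_one ((norm_sub_rev 1 x).trans_lt hx)

section NormedStarRing

variable {R : Type*} [NonUnitalSeminormedRing R] [StarRing R] [NormedStarGroup R]

theorem norm_mul_mul_star_sub_mul_mul_star_le (x z b : R) :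
    ‖x * b * star x - z * b * star z‖ ≤ (‖x‖ + ‖z‖) * ‖b‖ * ‖x - z‖ :=
  calc ‖x * b * star x - z * b * star z‖
      = ‖x * b * star (x - z) + (x - z) * b * star z‖ := by
        congr 1; rw [star_sub]; noncomm_ring
    _ ≤ ‖x‖ * ‖b‖ * ‖star (x - z)‖ + ‖x - z‖ * ‖b‖ * ‖star z‖ :=
        (norm_add_le _ _).trans (add_le_add norm_mul₃_le norm_mul₃_le)
    _ = (‖x‖ + ‖z‖) * ‖b‖ * ‖x - z‖ := by rw [norm_star, norm_star]; ring

theorem norm_mul_mul_sub_conj_le {p q : R} (hp : IsSelfAdjoint p) (hq : IsSelfAdjoint q)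
    (a b u w : R) :
    ‖p * a * p - w * (q * b * q) * star w‖ ≤
      ‖p‖ * ‖u * b * star u - a‖ * ‖p‖ + (‖p * u‖ + ‖w * q‖) * ‖b‖ * ‖p * u - w * q‖ :=
  calc ‖p * a * p - w * (q * b * q) * star w‖
      = ‖p * u * b * star (p * u) - w * q * b * star (w * q) - p * (u * b * star u - a) * p‖ := by
        congr 1; rw [star_mul, star_mul, hp.star_eq, hq.star_eq]; noncomm_ring
    _ ≤ ‖p * u * b * star (p * u) - w * q * b * star (w * q)‖ + ‖p * (u * b * star u - a) * p‖ :=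
        norm_sub_le _ _
    _ ≤ _ := by
        rw [add_comm]
        exact add_le_add norm_mul₃_le (norm_mul_mul_star_sub_mul_mul_star_le _ _ _)

end NormedStarRing

theorem norm_star_mul_mul_sub_of_mem_unitary {D : Type*} [NormedRing D] [StarRing D] [CStarRing D]
    {w : D} (hw : w ∈ unitary D) (a b : D) :
    ‖star w * a * w - b‖ = ‖a - w * b * star w‖ := by
  have conj_eq : w * (star w * a * w - b) * star w = a - w * b * star w := by
    have hw' := Unitary.mul_star_self_of_mem hw
    calc w * (star w * a * w - b) * star w
        = w * star w * a * (w * star w) - w * b * star w := by noncomm_ring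
      _ = a - w * b * star w := by rw [hw', one_mul, mul_one]
  rw [← conj_eq, CStarRing.norm_mul_mem_unitary _ (Unitary.star_mem hw),
    CStarRing.norm_mem_unitary_mul _ hw]

theorem exists_forall_norm_abs_sub_lt {D : Type*} [NonUnitalCStarAlgebra D] [PartialOrder D]
    [StarOrderedRing D] {q : D} (hq : 0 ≤ q) {η : ℝ} (hη : 0 < η) :
    ∃ δ > 0, ∀ x : D, ‖star x * x - q * q‖ < δ → ‖CFC.abs x - q‖ < η := by
  have hqq : 0 ≤ q * q := (IsSelfAdjoint.of_nonneg hq).mul_self_nonneg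
  obtain ⟨δ, hδ, hsqrt⟩ :=
    Metric.continuousWithinAt_iff.1 (CFC.continuousOn_sqrt (q * q) hqq) η hη
  refine ⟨δ, hδ, fun x hx => ?_⟩
  simpa only [CFC.abs, CFC.sqrt_mul_self q hq, dist_eq_norm] using
    hsqrt (star_mul_self_nonneg x) (by rwa [dist_eq_norm])

theorem tendsto_mul_mul_self_of_isIncreasingApproximateUnit {A : Type*} [NonUnitalCStarAlgebra A]
    [PartialOrder A] {l : Filter A} (hl : l.IsIncreasingApproximateUnit) (a : A) :
    Tendsto (fun e => e * a * e) l (𝓝 a) := by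
  have hright := tendsto_iff_norm_sub_tendsto_zero.1 (hl.tendsto_mul_left a)
  have hleft := tendsto_iff_norm_sub_tendsto_zero.1 (hl.tendsto_mul_right a)
  refine tendsto_iff_norm_sub_tendsto_zero.2 (squeeze_zero' (.of_forall fun _ => norm_nonneg _) ?_
    (by simpa only [add_zero] using hright.add hleft))
  filter_upwards [hl.eventually_norm] with e he
  calc ‖e * a * e - a‖ = ‖e * (a * e - a) + (e * a - a)‖ := by congr 1; noncomm_ring
    _ ≤ ‖e‖ * ‖a * e - a‖ + ‖e * a - a‖ :=
        (norm_add_le _ _).trans (by gcongr; exact norm_mul_le _ _)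
    _ ≤ ‖a * e - a‖ + ‖e * a - a‖ := by gcongr; exact mul_le_of_le_one_left (norm_nonneg _) he

section Polar

variable {D : Type*} [CStarAlgebra D] [PartialOrder D] [StarOrderedRing D]

theorem exists_unitary_eq_mul_abs {x : D} (hx : IsUnit x) :
    ∃ w ∈ unitary D, x = w * CFC.abs x := by
  obtain ⟨r, hr⟩ : IsUnit (CFC.abs x) :=
    (CFC.isUnit_sqrt_iff _ (star_mul_self_nonneg x)).2 (hx.star.mul hx)
  have r_inv_star : star (↑r⁻¹ : D) = ↑r⁻¹ := by
    have : star r = r := Units.ext (by rw [Units.coe_star, hr, (CFC.abs_nonneg x).star_eq])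
    rw [← Units.coe_star, star_inv, this]
  have isometry : star (x * ↑r⁻¹) * (x * ↑r⁻¹) = 1 :=
    calc star (x * ↑r⁻¹) * (x * ↑r⁻¹) = ↑r⁻¹ * (star x * x) * ↑r⁻¹ := by
          rw [star_mul, r_inv_star]; simp only [mul_assoc]
      _ = ↑r⁻¹ * (r * r) * ↑r⁻¹ := by rw [hr, CFC.abs_mul_abs]
      _ = 1 := by simp
  refine ⟨x * ↑r⁻¹, (hx.mul r⁻¹.isUnit).mem_unitary_of_star_mul_self isometry, ?_⟩
  rw [← hr, Units.inv_mul_cancel_right]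

theorem exists_unitary_norm_sub_mul_abs_lt {x : D} (hx : x ∈ closure {y : D | IsUnit y})
    {η : ℝ} (hη : 0 < η) : ∃ w ∈ unitary D, ‖x - w * CFC.abs x‖ < η := by
  have hcont : Continuous fun y : D => ‖x - y‖ + ‖CFC.abs y - CFC.abs x‖ := by
    have := CFC.continuous_abs (A := D)
    fun_prop
  have hnear : ∀ᶠ y in 𝓝 x, ‖x - y‖ + ‖CFC.abs y - CFC.abs x‖ < η :=
    hcont.continuousAt.eventually_lt_const (by simpa using hη)
  obtain ⟨y, hy, hxy⟩ := ((mem_closure_iff_frequently.1 hx).and_eventually hnear).exists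
  obtain ⟨w, hw, hyw⟩ := exists_unitary_eq_mul_abs hy
  refine ⟨w, hw, ?_⟩
  calc ‖x - w * CFC.abs x‖ = ‖(x - y) + w * (CFC.abs y - CFC.abs x)‖ := by
        rw [mul_sub, ← hyw, sub_add_sub_cancel]
    _ ≤ ‖x - y‖ + ‖CFC.abs y - CFC.abs x‖ := by
        rw [← CStarRing.norm_mem_unitary_mul (CFC.abs y - CFC.abs x) hw]
        exact norm_add_le _ _
    _ < η := hxy

theorem exists_forall_unitary_norm_sub_mul_lt {q : D} (hq : 0 ≤ q) {η : ℝ} (hη : 0 < η) :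
    ∃ δ > 0, ∀ x ∈ closure {y : D | IsUnit y}, ‖star x * x - q * q‖ < δ →
      ∃ w ∈ unitary D, ‖x - w * q‖ < η := by
  obtain ⟨δ, hδ, habs⟩ := exists_forall_norm_abs_sub_lt hq (half_pos hη)
  refine ⟨δ, hδ, fun x hx hxq => ?_⟩
  obtain ⟨w, hw, hxw⟩ := exists_unitary_norm_sub_mul_abs_lt hx (half_pos hη)
  refine ⟨w, hw, ?_⟩
  calc ‖x - w * q‖ = ‖(x - w * CFC.abs x) + w * (CFC.abs x - q)‖ := by
        rw [mul_sub, sub_add_sub_cancel]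
    _ ≤ ‖x - w * CFC.abs x‖ + ‖CFC.abs x - q‖ := by
        rw [← CStarRing.norm_mem_unitary_mul (CFC.abs x - q) hw]
        exact norm_add_le _ _
    _ < η := by linarith [habs x hxq]

section Conjugation

variable {A : Type*} [NonUnitalCStarAlgebra A] [PartialOrder A] [StarOrderedRing A]
  {φ ψ : A →⋆ₙₐ[ℂ] D} {e : A}

theorem exists_unitary_norm_map_mul_sub_mul_map_lt (he : 0 ≤ e)
    (h : ∀ (F : Finset A) (ε : ℝ), 0 < ε → ∃ u : D, φ e * u ∈ closure {y : D | IsUnit y} ∧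
      ∀ a ∈ F, ‖star u * φ a * u - ψ a‖ < ε ∧ ‖u * ψ a * star u - φ a‖ < ε)
    (F : Finset A) {η : ℝ} (hη : 0 < η) :
    ∃ u : D, ∃ w ∈ unitary D, ‖φ e * u - w * ψ e‖ < η ∧
      ∀ a ∈ F, ‖u * ψ a * star u - φ a‖ < η := by
  classical
  have hψe : 0 ≤ ψ e := by simpa only [map_zero] using OrderHomClass.mono ψ he
  obtain ⟨δ, hδ, hpolar⟩ := exists_forall_unitary_norm_sub_mul_lt hψe hη
  obtain ⟨u, hu_closure, hu⟩ := h (insert (e * e) F) (min δ η) (lt_min hδ hη)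
  have hsq : star (φ e * u) * (φ e * u) = star u * φ (e * e) * u := by
    rw [star_mul, ((IsSelfAdjoint.of_nonneg he).map φ).star_eq, map_mul]
    simp only [mul_assoc]
  obtain ⟨w, hw, hwu⟩ := hpolar _ hu_closure <| by
    rw [hsq, ← map_mul]
    exact (hu _ (F.mem_insert_self _)).1.trans_le (min_le_left _ _)
  exact ⟨u, w, hw, hwu, fun a ha =>
    (hu a (Finset.mem_insert_of_mem ha)).2.trans_le (min_le_right _ _)⟩

theorem exists_unitary_forall_norm_conj_sub_lt (he : 0 ≤ e)
    (h : ∀ (F : Finset A) (ε : ℝ), 0 < ε → ∃ u : D, φ e * u ∈ closure {y : D | IsUnit y} ∧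
      ∀ a ∈ F, ‖star u * φ a * u - ψ a‖ < ε ∧ ‖u * ψ a * star u - φ a‖ < ε)
    (F : Finset A) {ε : ℝ} (hε : 0 < ε) :
    ∃ w ∈ unitary D, ∀ a ∈ F, ‖star w * φ (e * a * e) * w - ψ (e * a * e)‖ < ε := by
  have he_sa : IsSelfAdjoint e := .of_nonneg he
  obtain ⟨η, hηF, hη⟩ : ∃ η : ℝ,
      (∀ a ∈ F, ‖e‖ * η * ‖e‖ + ((‖e‖ + η) + ‖e‖) * ‖a‖ * η < ε) ∧ 0 < η := by
    refine (Eventually.and ?_ self_mem_nhdsWithin).exists (f := 𝓝[>] (0 : ℝ))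
    refine eventually_nhdsWithin_of_eventually_nhds ((eventually_all_finset F).2 fun a _ => ?_)
    exact (Continuous.tendsto' (by fun_prop) 0 0 (by simp)).eventually_lt_const hε
  obtain ⟨u, w, hw, hwu, huF⟩ := exists_unitary_norm_map_mul_sub_mul_map_lt he h F hη
  refine ⟨w, hw, fun a ha => ?_⟩
  have hφe : ‖φ e‖ ≤ ‖e‖ := NonUnitalStarAlgHom.norm_apply_le φ e
  have hψa : ‖ψ a‖ ≤ ‖a‖ := NonUnitalStarAlgHom.norm_apply_le ψ a
  have hwψe : ‖w * ψ e‖ ≤ ‖e‖ := by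
    rw [CStarRing.norm_mem_unitary_mul _ hw]
    exact NonUnitalStarAlgHom.norm_apply_le ψ e
  have hφeu : ‖φ e * u‖ ≤ ‖e‖ + η := by
    linarith [norm_le_norm_add_norm_sub' (φ e * u) (w * ψ e)]
  have hua : ‖u * ψ a * star u - φ a‖ ≤ η := (huF a ha).le
  calc ‖star w * φ (e * a * e) * w - ψ (e * a * e)‖
      = ‖φ e * φ a * φ e - w * (ψ e * ψ a * ψ e) * star w‖ := by
        simp only [norm_star_mul_mul_sub_of_mem_unitary hw, map_mul]
    _ ≤ ‖φ e‖ * ‖u * ψ a * star u - φ a‖ * ‖φ e‖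
          + (‖φ e * u‖ + ‖w * ψ e‖) * ‖ψ a‖ * ‖φ e * u - w * ψ e‖ :=
        norm_mul_mul_sub_conj_le (he_sa.map φ) (he_sa.map ψ) _ _ u w
    _ ≤ ‖e‖ * η * ‖e‖ + ((‖e‖ + η) + ‖e‖) * ‖a‖ * η := by gcongr
    _ < ε := hηF a ha

end Conjugation

end Polar

/-- Approximate unitary equivalence of *-homomorphisms into a unital C*-algebra `D`, the
conjugating unitaries being taken in `D`. Its domain is allowed to be non-unital, so that `D` may be
the minimal unitisation of the algebra in which the maps originally take values. -/
def ApproxUnitaryEquiv {A D : Type*} [NonUnitalCStarAlgebra A] [CStarAlgebra D]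
    (φ ψ : A →⋆ₙₐ[ℂ] D) : Prop :=
  ∀ (F : Finset A) (ε : ℝ), 0 < ε → ∃ u ∈ unitary D, ∀ a ∈ F, ‖star u * φ a * u - ψ a‖ < ε

theorem ApproxMvNEquiv.comp {A B C : Type*} [NonUnitalCStarAlgebra A] [NonUnitalCStarAlgebra B]
    [NonUnitalCStarAlgebra C] {φ ψ : A →⋆ₙₐ[ℂ] B} (h : ApproxMvNEquiv φ ψ) (θ : B →⋆ₙₐ[ℂ] C) :
    ApproxMvNEquiv (θ.comp φ) (θ.comp ψ) := by
  intro F ε hε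
  obtain ⟨u, hu⟩ := h F ε hε
  refine ⟨θ u, fun a ha => ?_⟩
  simp only [NonUnitalStarAlgHom.comp_apply, ← map_star, ← map_mul, ← map_sub]
  exact ⟨(NonUnitalStarAlgHom.norm_apply_le θ _).trans_lt (hu a ha).1,
    (NonUnitalStarAlgHom.norm_apply_le θ _).trans_lt (hu a ha).2⟩

theorem ApproxMvNEquiv.exists_isUnit {A D : Type*} [CStarAlgebra A] [CStarAlgebra D]
    {φ ψ : A →⋆ₙₐ[ℂ] D} (h : ApproxMvNEquiv φ ψ) (hφ : φ 1 = 1) (hψ : ψ 1 = 1)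
    (F : Finset A) {ε : ℝ} (hε : 0 < ε) :
    ∃ u : D, IsUnit u ∧
      ∀ a ∈ F, ‖star u * φ a * u - ψ a‖ < ε ∧ ‖u * ψ a * star u - φ a‖ < ε := by
  classical
  obtain ⟨u, hu⟩ := h (insert 1 F) (min ε 1) (lt_min hε one_pos)
  obtain ⟨hu_left, hu_right⟩ := hu 1 (F.mem_insert_self 1)
  rw [hφ, hψ, mul_one] at hu_left hu_right
  refine ⟨u, isUnit_of_isUnit_mul_of_isUnit_mul
    (isUnit_of_norm_sub_one_lt_one (hu_left.trans_le (min_le_right _ _)))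
    (isUnit_of_norm_sub_one_lt_one (hu_right.trans_le (min_le_right _ _))), fun a ha => ?_⟩
  obtain ⟨hua, hua'⟩ := hu a (Finset.mem_insert_of_mem ha)
  exact ⟨hua.trans_le (min_le_left _ _), hua'.trans_le (min_le_left _ _)⟩

theorem ApproxMvNEquiv.approxUnitaryEquiv_of_map_one {A D : Type*} [CStarAlgebra A]
    [CStarAlgebra D] {φ ψ : A →⋆ₙₐ[ℂ] D} (h : ApproxMvNEquiv φ ψ) (hφ : φ 1 = 1) (hψ : ψ 1 = 1) :
    ApproxUnitaryEquiv φ ψ := by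
  intro F ε hε
  let _ := CStarAlgebra.spectralOrder A
  have := CStarAlgebra.spectralOrderedRing A
  let _ := CStarAlgebra.spectralOrder D
  have := CStarAlgebra.spectralOrderedRing D
  have hunit (F : Finset A) (ε : ℝ) (hε : 0 < ε) :
      ∃ u : D, φ 1 * u ∈ closure {y : D | IsUnit y} ∧
        ∀ a ∈ F, ‖star u * φ a * u - ψ a‖ < ε ∧ ‖u * ψ a * star u - φ a‖ < ε := by
    obtain ⟨u, hu_unit, hu⟩ := h.exists_isUnit hφ hψ F hε
    exact ⟨u, by rw [hφ, one_mul]; exact subset_closure hu_unit, hu⟩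
  simpa only [one_mul, mul_one] using
    exists_unitary_forall_norm_conj_sub_lt zero_le_one hunit F hε

theorem ApproxMvNEquiv.approxUnitaryEquiv_of_dense_isUnit {A D : Type*} [NonUnitalCStarAlgebra A]
    [CStarAlgebra D] {φ ψ : A →⋆ₙₐ[ℂ] D} (h : ApproxMvNEquiv φ ψ)
    (hD : Dense {x : D | IsUnit x}) : ApproxUnitaryEquiv φ ψ := by
  intro F ε hε
  let _ := CStarAlgebra.spectralOrder A
  have := CStarAlgebra.spectralOrderedRing A
  let _ := CStarAlgebra.spectralOrder D
  have := CStarAlgebra.spectralOrderedRing D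
  have hl := CStarAlgebra.increasingApproximateUnit A
  have := hl.neBot
  have hclose : ∀ᶠ e in CStarAlgebra.approximateUnit A, ∀ a ∈ F, ‖e * a * e - a‖ < ε / 3 :=
    (eventually_all_finset F).2 fun a _ =>
      (tendsto_iff_norm_sub_tendsto_zero.1 (tendsto_mul_mul_self_of_isIncreasingApproximateUnit
        hl a)).eventually_lt_const (by positivity)
  obtain ⟨e, he, heF⟩ := (hl.eventually_nonneg.and hclose).exists
  obtain ⟨w, hw, hwF⟩ := exists_unitary_forall_norm_conj_sub_lt he
    (fun F ε hε => (h F ε hε).imp fun u hu => ⟨hD (φ e * u), hu⟩) F (show 0 < ε / 3 by positivity)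
  refine ⟨w, hw, fun a ha => ?_⟩
  have hφ : ‖star w * φ (e * a * e - a) * w‖ < ε / 3 := by
    rw [CStarRing.norm_mul_mem_unitary _ hw, CStarRing.norm_mem_unitary_mul _ (Unitary.star_mem hw)]
    exact (NonUnitalStarAlgHom.norm_apply_le φ _).trans_lt (heF a ha)
  have hψ : ‖ψ (e * a * e - a)‖ < ε / 3 :=
    (NonUnitalStarAlgHom.norm_apply_le ψ _).trans_lt (heF a ha)
  calc ‖star w * φ a * w - ψ a‖
      = ‖(star w * φ (e * a * e) * w - ψ (e * a * e)) - star w * φ (e * a * e - a) * w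
          + ψ (e * a * e - a)‖ := by
        congr 1; rw [map_sub φ, map_sub ψ]; noncomm_ring
    _ ≤ ‖star w * φ (e * a * e) * w - ψ (e * a * e)‖ + ‖star w * φ (e * a * e - a) * w‖
          + ‖ψ (e * a * e - a)‖ := (norm_add_le _ _).trans (by gcongr; exact norm_sub_le _ _)
    _ < ε := by linarith [hwF a ha]

/-- A (non-unital) C*-algebra possessing a two-sided unit element `e`, as a unital C*-algebra. The
underlying non-unital structure is kept, so that *-homomorphisms for it need no transport. -/
noncomputable abbrev cstarAlgebraOfOne (B : Type*) [i : NonUnitalCStarAlgebra B] (e : B)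
    (he : ∀ y : B, e * y = y ∧ y * e = y) : CStarAlgebra B :=
  letI ring : NormedRing B :=
    { i.toNonUnitalNormedRing with
      one := e
      one_mul := fun y => (he y).1
      mul_one := fun y => (he y).2 }
  letI algebra : Algebra ℂ B := Algebra.ofModule smul_mul_assoc mul_smul_comm
  { ring, i with
    toAlgebra := algebra
    norm_smul_le := norm_smul_le }

theorem approxMvNEquiv_implies_approxUnitaryEquiv_general
    {A : Type u} {B : Type v} [NonUnitalCStarAlgebra A] [NonUnitalCStarAlgebra B]
    (φ ψ : A →⋆ₙₐ[ℂ] B) (h : ApproxMvNEquiv φ ψ) :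
    ((∀ (eA : A) (eB : B), (∀ x : A, eA * x = x ∧ x * eA = x) →
      (∀ y : B, eB * y = y ∧ y * eB = y) → φ eA = eB → ψ eA = eB →
      ∀ (F : Finset A) (ε : ℝ), 0 < ε → ∃ u : B, star u * u = eB ∧ u * star u = eB ∧
        ∀ a ∈ F, ‖star u * φ a * u - ψ a‖ < ε)) ∧
    (Dense {x : Unitization ℂ B | IsUnit x} →
      ∀ (F : Finset A) (ε : ℝ), 0 < ε → ∃ u ∈ unitary (Unitization ℂ B),
        ∀ a ∈ F, ‖star u * (φ a : Unitization ℂ B) * u - (ψ a : Unitization ℂ B)‖ < ε) := by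
  refine ⟨fun eA eB hA hB hφ hψ F ε hε => ?_, fun hB => ?_⟩
  · let _ := cstarAlgebraOfOne A eA hA
    let _ := cstarAlgebraOfOne B eB hB
    obtain ⟨u, hu, huF⟩ := ApproxMvNEquiv.approxUnitaryEquiv_of_map_one h hφ hψ F ε hε
    exact ⟨u, Unitary.star_mul_self_of_mem hu, Unitary.mul_star_self_of_mem hu, huF⟩
  · exact (h.comp (Unitization.inrNonUnitalStarAlgHom ℂ B)).approxUnitaryEquiv_of_dense_isUnit hB

/-- Let `A` be separable and `φ, ψ : A → B` approximately Murray–von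
Neumann equivalent *-homomorphisms. If (a) `A`, `B`, `φ`, `ψ` are unital, then `φ` and `ψ`
are approximately unitarily equivalent with unitaries in `B`; if (c) `B` has stable rank
one (invertibles dense in the minimal unitisation), then they are approximately unitarily
equivalent with unitaries in the minimal unitisation of `B`. -/
theorem approxMvNEquiv_implies_approxUnitaryEquiv
    {A : Type u} {B : Type v} [NonUnitalCStarAlgebra A] [NonUnitalCStarAlgebra B]
    [TopologicalSpace.SeparableSpace A]
    (φ ψ : A →⋆ₙₐ[ℂ] B) (h : ApproxMvNEquiv φ ψ) :
    ((∀ (eA : A) (eB : B), (∀ x : A, eA * x = x ∧ x * eA = x) →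
      (∀ y : B, eB * y = y ∧ y * eB = y) → φ eA = eB → ψ eA = eB →
      ∀ (F : Finset A) (ε : ℝ), 0 < ε → ∃ u : B, star u * u = eB ∧ u * star u = eB ∧
        ∀ a ∈ F, ‖star u * φ a * u - ψ a‖ < ε)) ∧
    (Dense {x : Unitization ℂ B | IsUnit x} →
      ∀ (F : Finset A) (ε : ℝ), 0 < ε → ∃ u ∈ unitary (Unitization ℂ B),
        ∀ a ∈ F, ‖star u * (φ a : Unitization ℂ B) * u - (ψ a : Unitization ℂ B)‖ < ε) :=
  approxMvNEquiv_implies_approxUnitaryEquiv_general φ ψ h
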